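/- arXiv:2007.14088 — 2 statements merged into one kernel-verified Lean document; each statement's English description precedes it below -/
import Mathlib

section
/- Let F be a finite field of characteristic 2 with q = 2^n elements, and let G = C_4 × C_2 × C_2 × C_2. Then the unit group of the group algebra FG is isomorphic to C_4^n × C_2^{29n} × C_{2^n - 1}. -/
/-- The cyclic group of order `m`, realized as `Multiplicative (ZMod m)`. -/
abbrev C (m : ℕ) : Type := Multiplicative (ZMod m)

/-!
Let `G` be a finite abelian group with `g ^ p ^ 2 = 1` for all `g`, and `F` a field of order
`q = p ^ n`. Scalars split off: the units of `F[G]` are `Fˣ` times the group `V` of units of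
augmentation one. Since `x ^ p ^ 2` is the scalar `ε(x) ^ p ^ 2`, every element of augmentation one
is a unit and `V` has exponent dividing `p ^ 2`, so its isomorphism type is determined by `|V|` and
by the number of `v` with `v ^ p = 1`. Under `v ↦ v - 1` these two sets become the kernel of
the augmentation, of order `q ^ (|G| - 1)`, and the kernel of the Frobenius of `F[G]`, of order
`q ^ (|G| - |Gᵖ|)` because the image of the Frobenius is `F[Gᵖ]`.
-/

theorem card_cyclic (m : ℕ) : Nat.card (C m) = m :=
  Nat.card_zmod m

section CommGroup

theorem nonempty_mulEquiv_ker_prod {A B : Type*} [CommGroup A] [CommGroup B] (f : A →* B)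
    (s : B →* A) (hs : Function.LeftInverse f s) : Nonempty (A ≃* f.ker × B) := by
  refine ⟨(MulEquiv.ofBijective (f.ker.subtype.coprod s) ⟨?_, fun a ↦ ?_⟩).symm⟩
  · rw [injective_iff_map_eq_one]
    rintro ⟨⟨k, hk⟩, b⟩ h
    have hb : b = 1 := by simpa [hs b, f.mem_ker.1 hk] using congrArg f h
    subst hb
    simpa using h
  · exact ⟨(⟨a * (s (f a))⁻¹, by simp [f.mem_ker, hs (f a)]⟩, f a), by simp⟩

theorem card_ker_powMonoidHom_congr {A B : Type*} [CommGroup A] [CommGroup B] (e : A ≃* B)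
    (d : ℕ) :
    Nat.card (powMonoidHom d : A →* A).ker = Nat.card (powMonoidHom d : B →* B).ker :=
  Nat.card_congr <| e.toEquiv.subtypeEquiv fun x ↦ by
    simp [MonoidHom.mem_ker, ← map_pow]

theorem card_ker_powMonoidHom_pi {ι : Type*} [Fintype ι] (A : ι → Type*) [∀ i, CommGroup (A i)]
    (d : ℕ) :
    Nat.card (powMonoidHom d : (∀ i, A i) →* ∀ i, A i).ker =
      ∏ i, Nat.card (powMonoidHom d : A i →* A i).ker := by
  rw [← Nat.card_pi]
  refine Nat.card_congr <| (Equiv.subtypeEquivRight fun x ↦ ?_).trans Equiv.subtypePiEquivPi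
  simp [MonoidHom.mem_ker, funext_iff]

theorem card_ker_powMonoidHom_pi_cyclic {ι : Type*} [Fintype ι] {m : ι → ℕ} [∀ i, NeZero (m i)]
    {d : ℕ} (hd : ∀ i, d ∣ m i) :
    Nat.card (powMonoidHom d : (∀ i, C (m i)) →* ∀ i, C (m i)).ker = d ^ Fintype.card ι := by
  simp only [card_ker_powMonoidHom_pi, IsCyclic.card_powMonoidHom_ker, card_cyclic,
    Nat.gcd_eq_right (hd _), Finset.prod_const, Finset.card_univ]

theorem nonempty_pi_cyclic_mulEquiv_prod {ι : Type*} (m : ι → ℕ) (k l : ℕ)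
    (hm : ∀ i, m i = k ∨ m i = l) :
    Nonempty ((∀ i, C (m i)) ≃* ({i // m i = k} → C k) × ({i // m i ≠ k} → C l)) := by
  classical
  let split : (∀ i, C (m i)) ≃* (∀ i : {i // m i = k}, C (m i)) × (∀ i : {i // m i ≠ k}, C (m i)) :=
    { Equiv.piEquivPiSubtypeProd (fun i ↦ m i = k) _ with map_mul' := fun _ _ ↦ rfl }
  let cast {r s : ℕ} (h : r = s) : C r ≃* C s :=
    AddEquiv.toMultiplicative (ZMod.ringEquivCongr h).toAddEquiv
  exact ⟨split.trans <| MulEquiv.prodCongr (MulEquiv.piCongrRight fun i ↦ cast i.2)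
    (MulEquiv.piCongrRight fun i ↦ cast ((hm i).resolve_left i.2))⟩

variable {A : Type*} [CommGroup A] [Finite A] {p : ℕ}

theorem exists_mulEquiv_pi_cyclic_of_pow_eq_one {d : ℕ} (hA : ∀ x : A, x ^ d = 1) :
    ∃ (ι : Type) (_ : Fintype ι) (m : ι → ℕ),
      (∀ i, m i ≠ 1 ∧ m i ∣ d) ∧ Nonempty (A ≃* ∀ i, C (m i)) := by
  classical
  obtain ⟨ι, hι, m, hm, ⟨e⟩⟩ := CommGroup.equiv_prod_multiplicative_zmod_of_finite A
  refine ⟨ι, hι, m, fun i ↦ ⟨(hm i).ne', ?_⟩, ⟨e⟩⟩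
  have hgen : (Pi.mulSingle i (Multiplicative.ofAdd 1) : ∀ i, C (m i)) ^ d = 1 := by
    rw [← e.apply_symm_apply (Pi.mulSingle i _), ← map_pow, hA, map_one]
  rw [← ZMod.natCast_eq_zero_iff, ← nsmul_one, ← ofAdd_eq_one, ofAdd_nsmul]
  simpa using congrFun hgen i

theorem nonempty_mulEquiv_cyclic_sq_prod_cyclic [Fact p.Prime] (hA : ∀ x : A, x ^ p ^ 2 = 1)
    {a b : ℕ} (hcard : Nat.card A = p ^ (a + 2 * b))
    (hker : Nat.card (powMonoidHom p : A →* A).ker = p ^ (a + b)) :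
    Nonempty (A ≃* (Fin b → C (p ^ 2)) × (Fin a → C p)) := by
  classical
  have hp : p.Prime := Fact.out
  obtain ⟨ι, _, m, hm, ⟨e⟩⟩ := exists_mulEquiv_pi_cyclic_of_pow_eq_one hA
  have hm' : ∀ i, m i = p ^ 2 ∨ m i = p := fun i ↦ by
    obtain ⟨h1, hdvd⟩ := hm i
    obtain ⟨k, hk, hmk⟩ := (Nat.dvd_prime_pow hp).1 hdvd
    interval_cases k <;> simp_all
  obtain ⟨e'⟩ := nonempty_pi_cyclic_mulEquiv_prod m (p ^ 2) p hm'
  have hrank : Nat.card (powMonoidHom p : A →* A).ker = p ^ Fintype.card ι := by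
    have : ∀ i, NeZero (m i) := fun i ↦ ⟨ne_zero_of_dvd_ne_zero (pow_ne_zero 2 hp.ne_zero) (hm i).2⟩
    rw [card_ker_powMonoidHom_congr e, card_ker_powMonoidHom_pi_cyclic fun i ↦ ?_]
    rcases hm' i with h | h <;> simp [h, pow_two]
  have horder : Nat.card A =
      p ^ (2 * Fintype.card {i // m i = p ^ 2} + Fintype.card {i // m i ≠ p ^ 2}) := by
    simp [Nat.card_congr (e.trans e').toEquiv, pow_add, pow_mul]
  have hab := Nat.pow_right_injective hp.two_le (hker.symm.trans hrank)
  have hab' := Nat.pow_right_injective hp.two_le (hcard.symm.trans horder)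
  have hcompl := Fintype.card_subtype_compl fun i ↦ m i = p ^ 2
  have hb : Fintype.card {i // m i = p ^ 2} = b := by lia
  have ha : Fintype.card {i // m i ≠ p ^ 2} = a := by lia
  exact ⟨(e.trans e').trans <| MulEquiv.prodCongr
    (MulEquiv.arrowCongr (Fintype.equivFinOfCardEq hb) (.refl _))
    (MulEquiv.arrowCongr (Fintype.equivFinOfCardEq ha) (.refl _))⟩

end CommGroup

theorem card_ker_mul_card_range {A B : Type*} [Ring A] [Ring B] (f : A →+* B) :
    Nat.card (RingHom.ker f) * Nat.card f.range = Nat.card A := by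
  rw [← f.toAddMonoidHom.ker.card_mul_index, AddSubgroup.index_ker]
  rfl

theorem card_monoidAlgebra {R M : Type*} [Semiring R] [Finite M] :
    Nat.card (MonoidAlgebra R M) = Nat.card R ^ Nat.card M := by
  rw [Nat.card_congr (MonoidAlgebra.coeffEquiv.trans Finsupp.equivFunOnFinite), Nat.card_fun]

section Augmentation

variable (R G : Type*) [CommRing R] [CommGroup G]

/-- The augmentation of a group algebra: the sum of the coefficients. -/
noncomputable def augmentation : MonoidAlgebra R G →ₐ[R] R :=
  MonoidAlgebra.lift R R G 1

/-- The units of augmentation one, usually denoted `V(R[G])`. -/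
noncomputable def normalizedUnits : Subgroup (MonoidAlgebra R G)ˣ :=
  (Units.map (augmentation R G : MonoidAlgebra R G →* R)).ker

variable {R G}

theorem augmentation_surjective : Function.Surjective (augmentation R G) := fun r ↦
  ⟨algebraMap R _ r, (augmentation R G).commutes r⟩

theorem mem_normalizedUnits {u : (MonoidAlgebra R G)ˣ} :
    u ∈ normalizedUnits R G ↔ augmentation R G u = 1 := by
  simp [normalizedUnits, MonoidHom.mem_ker, Units.ext_iff]

variable (R G) in
theorem nonempty_units_mulEquiv_normalizedUnits_prod :
    Nonempty ((MonoidAlgebra R G)ˣ ≃* normalizedUnits R G × Rˣ) :=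
  nonempty_mulEquiv_ker_prod _
    (Units.map (algebraMap R (MonoidAlgebra R G) : R →* MonoidAlgebra R G))
    fun r ↦ Units.ext <| (augmentation R G).commutes (r : R)

variable {p k : ℕ} [ExpChar R p]

instance expChar_monoidAlgebra : ExpChar (MonoidAlgebra R G) p :=
  expChar_of_injective_algebraMap MonoidAlgebra.single_right_injective p

theorem pow_eq_algebraMap_augmentation (hG : ∀ g : G, g ^ p ^ k = 1) (x : MonoidAlgebra R G) :
    x ^ p ^ k = algebraMap R _ (augmentation R G x ^ p ^ k) := by
  induction x using MonoidAlgebra.induction_linear with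
  | zero => simp [(expChar_pos R p).ne']
  | add x y hx hy => simp only [add_pow_expChar_pow, map_add, hx, hy]
  | single g r => simp [augmentation, MonoidAlgebra.single_pow, hG]

theorem pow_eq_one_of_augmentation_eq_one (hG : ∀ g : G, g ^ p ^ k = 1) {x : MonoidAlgebra R G}
    (hx : augmentation R G x = 1) : x ^ p ^ k = 1 := by
  rw [pow_eq_algebraMap_augmentation hG, hx, one_pow, map_one]

theorem pow_eq_one_of_mem_normalizedUnits (hG : ∀ g : G, g ^ p ^ k = 1) (v : normalizedUnits R G) :
    v ^ p ^ k = 1 :=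
  Subtype.ext <| Units.ext <| pow_eq_one_of_augmentation_eq_one hG (mem_normalizedUnits.1 v.2)

/-- The bijection `v ↦ v - 1` from the normalized units onto the augmentation ideal, for a group
`G` whose exponent divides a power of the characteristic. -/
noncomputable def normalizedUnitsEquivKer (hG : ∀ g : G, g ^ p ^ k = 1) :
    normalizedUnits R G ≃ RingHom.ker (augmentation R G) where
  toFun v := ⟨v.1 - 1, by simp [RingHom.mem_ker, mem_normalizedUnits.1 v.2]⟩
  invFun x :=
    have hx : augmentation R G (x + 1) = 1 := by simp [RingHom.mem_ker.1 x.2]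
    ⟨Units.ofPowEqOne _ (p ^ k) (pow_eq_one_of_augmentation_eq_one hG hx)
      (pow_pos (expChar_pos R p) k).ne', mem_normalizedUnits.2 hx⟩
  left_inv v := Subtype.ext <| Units.ext <| sub_add_cancel _ _
  right_inv x := Subtype.ext <| add_sub_cancel_right _ _

theorem card_normalizedUnits_mul_card [Finite G] (hG : ∀ g : G, g ^ p ^ k = 1) :
    Nat.card (normalizedUnits R G) * Nat.card R = Nat.card R ^ Nat.card G := by
  have hrange : (augmentation R G : MonoidAlgebra R G →+* R).range = ⊤ :=
    RingHom.range_eq_top.2 augmentation_surjective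
  have hker := card_ker_mul_card_range (augmentation R G : MonoidAlgebra R G →+* R)
  rw [hrange, Nat.card_congr Subring.topEquiv.toEquiv, card_monoidAlgebra] at hker
  rwa [Nat.card_congr (normalizedUnitsEquivKer hG)]

variable [PerfectRing R p]

theorem range_frobenius_monoidAlgebra :
    (frobenius (MonoidAlgebra R G) p).range =
      (MonoidAlgebra.mapDomainRingHom R (powMonoidHom p : G →* G).range.subtype).range := by
  apply le_antisymm
  · rintro _ ⟨x, rfl⟩
    induction x using MonoidAlgebra.induction_linear with
    | zero => simp
    | add x y hx hy =>
      rw [map_add]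
      exact add_mem hx hy
    | single g r => exact ⟨.single ⟨g ^ p, g, rfl⟩ (r ^ p), by simp [frobenius_def]⟩
  · rintro _ ⟨y, rfl⟩
    induction y using MonoidAlgebra.induction_linear with
    | zero => simp
    | add x y hx hy =>
      rw [map_add]
      exact add_mem hx hy
    | single h r =>
      obtain ⟨_, g, rfl⟩ := h
      obtain ⟨s, rfl⟩ := surjective_frobenius R p r
      exact ⟨.single g s, by simp [frobenius_def]⟩

theorem card_range_frobenius_monoidAlgebra [Finite G] :
    Nat.card (frobenius (MonoidAlgebra R G) p).range =
      Nat.card R ^ Nat.card (powMonoidHom p : G →* G).range := by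
  rw [range_frobenius_monoidAlgebra, ← card_monoidAlgebra]
  exact (Nat.card_congr <| Equiv.ofInjective _ <|
    MonoidAlgebra.mapDomain_injective Subtype.val_injective).symm

theorem ker_frobenius_le_ker_augmentation :
    RingHom.ker (frobenius (MonoidAlgebra R G) p) ≤ RingHom.ker (augmentation R G) := fun x hx ↦ by
  rw [RingHom.mem_ker] at hx ⊢
  apply injective_frobenius R p
  rw [frobenius_def, ← map_pow, ← frobenius_def, hx, map_zero, map_zero]

theorem card_ker_powMonoidHom_normalizedUnits (hG : ∀ g : G, g ^ p ^ k = 1) :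
    Nat.card (powMonoidHom p : normalizedUnits R G →* normalizedUnits R G).ker =
      Nat.card (RingHom.ker (frobenius (MonoidAlgebra R G) p)) := by
  refine Nat.card_congr <| ((normalizedUnitsEquivKer hG).subtypeEquiv fun v ↦ ?_).trans <|
    Equiv.subtypeSubtypeEquivSubtype fun {x} hx ↦ ker_frobenius_le_ker_augmentation hx
  change v ^ p = 1 ↔ frobenius (MonoidAlgebra R G) p (v.1 - 1) = 0
  rw [map_sub, map_one, sub_eq_zero, frobenius_def, Subtype.ext_iff, Units.ext_iff]
  rfl

theorem card_ker_powMonoidHom_normalizedUnits_mul [Finite G] (hG : ∀ g : G, g ^ p ^ k = 1) :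
    Nat.card (powMonoidHom p : normalizedUnits R G →* normalizedUnits R G).ker *
      Nat.card R ^ Nat.card (powMonoidHom p : G →* G).range = Nat.card R ^ Nat.card G := by
  rw [card_ker_powMonoidHom_normalizedUnits hG, ← card_range_frobenius_monoidAlgebra,
    card_ker_mul_card_range, card_monoidAlgebra]

end Augmentation

theorem nonempty_normalizedUnits_mulEquiv {p : ℕ} [Fact p.Prime] {F : Type*} [Field F] [CharP F p]
    {G : Type*} [CommGroup G] (hG : ∀ g : G, g ^ p ^ 2 = 1) {n a b : ℕ} (hF : Nat.card F = p ^ n)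
    (hcard : Nat.card G = a + 2 * b + 1)
    (hpow : Nat.card (powMonoidHom p : G →* G).range = b + 1) :
    Nonempty (normalizedUnits F G ≃* (Fin (b * n) → C (p ^ 2)) × (Fin (a * n) → C p)) := by
  have hp : 0 < p := (Fact.out : p.Prime).pos
  have : Finite F := Nat.finite_of_card_ne_zero (by rw [hF]; positivity)
  have : Finite G := Nat.finite_of_card_ne_zero (by rw [hcard]; positivity)
  have : Finite (MonoidAlgebra F G) :=
    Nat.finite_of_card_ne_zero (by rw [card_monoidAlgebra, hF]; positivity)
  refine nonempty_mulEquiv_cyclic_sq_prod_cyclic (pow_eq_one_of_mem_normalizedUnits hG) ?_ ?_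
  · have h := card_normalizedUnits_mul_card (R := F) hG
    rw [hF, hcard] at h
    refine Nat.eq_of_mul_eq_mul_right (pow_pos hp n) (h.trans ?_)
    ring
  · have h := card_ker_powMonoidHom_normalizedUnits_mul (R := F) hG
    rw [hF, hcard, hpow] at h
    refine Nat.eq_of_mul_eq_mul_right (pow_pos (pow_pos hp n) (b + 1)) (h.trans ?_)
    ring

theorem nonempty_units_mulEquiv_cyclic {F : Type*} [Field F] [Finite F] :
    Nonempty (Fˣ ≃* C (Nat.card F - 1)) :=
  ⟨mulEquivOfCyclicCardEq <| by rw [Nat.card_units, card_cyclic]⟩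

/- Every finite `G` of exponent dividing `p ^ 2` has such `a` and `b`: if `G` is nontrivial, then
`p * |Gᵖ|` divides `|G|`, so that `|G| ≥ 2 * |Gᵖ|`. -/
theorem unit_group_stmt_10_general {p : ℕ} [Fact p.Prime] {F : Type*} [Field F] [CharP F p]
    {G : Type*} [CommGroup G] (hG : ∀ g : G, g ^ p ^ 2 = 1) {n a b : ℕ} (hF : Nat.card F = p ^ n)
    (hcard : Nat.card G = a + 2 * b + 1)
    (hpow : Nat.card (powMonoidHom p : G →* G).range = b + 1) :
    Nonempty ((MonoidAlgebra F G)ˣ ≃*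
      (Fin (b * n) → C (p ^ 2)) × (Fin (a * n) → C p) × C (p ^ n - 1)) := by
  have : Finite F :=
    Nat.finite_of_card_ne_zero (by simp [hF, (Fact.out : p.Prime).ne_zero])
  obtain ⟨e⟩ := nonempty_units_mulEquiv_normalizedUnits_prod F G
  obtain ⟨eV⟩ := nonempty_normalizedUnits_mulEquiv (F := F) hG hF hcard hpow
  obtain ⟨eF⟩ := nonempty_units_mulEquiv_cyclic (F := F)
  rw [hF] at eF
  exact ⟨(e.trans (eV.prodCongr eF)).trans MulEquiv.prodAssoc⟩

theorem unit_group_stmt_10 (F : Type*) [Field F] [Fintype F] [CharP F 2]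
    (n : ℕ) (hn : 0 < n) (hF : Fintype.card F = 2 ^ n) :
    Nonempty ((MonoidAlgebra F (C 4 × C 2 × C 2 × C 2))ˣ ≃*
      ((Fin (n) → C 4) × (Fin (29 * n) → C 2) × C (2 ^ n - 1))) := by
  have h := unit_group_stmt_10_general (p := 2) (F := F) (G := C 4 × C 2 × C 2 × C 2) (a := 29)
    (b := 1) (by decide) (Nat.card_eq_fintype_card.trans hF) (by simp)
    (by rw [Nat.card_eq_fintype_card]; decide)
  rwa [one_mul] at h
end

section
/- Let F be a finite field of characteristic p > 2 with q = p^n elements, and let G = C_4 × C_2 × C_2 × C_2. Then the unit group U(FG) is isomorphic to: C_{p^n-1}^{32} if q ≡ 1 (mod 4); C_{p^n-1}^{16} × C_{p^{2n}-1}^8 if q ≡ -1 (mod 4). -/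
/-!
The group algebra of `C_m` is `R[X] / (X ^ m - 1)`. As `2` is invertible in `F`, the Chinese
remainder theorem gives `F[C_2] ≃ F ^ 2`, so `F[C_4 × C_2 ^ 3] ≃ F[C_4] ^ 8`. If `q ≡ 1 (mod 4)`,
then `F` contains a primitive fourth root of unity and `F[C_4] ≃ F ^ 4`. If `q ≡ -1 (mod 4)`, then
`X ^ 2 + 1` is irreducible and `F[C_4] ≃ F ^ 2 × F[X] / (X ^ 2 + 1)`, whose last factor is a field
with `q ^ 2` elements. Unit groups of finite fields are cyclic.
-/

open Polynomial (X)
open scoped Function MonoidAlgebra Polynomial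

section Pi

/-- The ring isomorphism `(A ^ n) ^ m ≃ A ^ (m * n)`. -/
def piFinMulRingEquiv (m n : ℕ) (A : Type*) [NonUnitalNonAssocSemiring A] :
    (Fin m → Fin n → A) ≃+* (Fin (m * n) → A) where
  toEquiv := (Equiv.curry _ _ _).symm.trans (finProdFinEquiv.arrowCongr (.refl A))
  map_mul' _ _ := rfl
  map_add' _ _ := rfl

/-- The ring isomorphism `(A × B) ^ ι ≃ A ^ ι × B ^ ι`. -/
def piProdRingEquiv (ι A B : Type*) [NonUnitalNonAssocSemiring A] [NonUnitalNonAssocSemiring B] :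
    (ι → A × B) ≃+* (ι → A) × (ι → B) where
  toEquiv := Equiv.arrowProdEquivProdArrow ι _ _
  map_mul' _ _ := rfl
  map_add' _ _ := rfl

end Pi

section AdjoinRoot

variable {R : Type*} [CommRing R]

/-- The Chinese remainder theorem for a product of two coprime polynomials. -/
noncomputable def adjoinRootMulEquiv {f g : R[X]} (h : IsCoprime f g) :
    AdjoinRoot (f * g) ≃+* AdjoinRoot f × AdjoinRoot g :=
  (Ideal.quotEquivOfEq (Ideal.span_singleton_mul_span_singleton f g).symm).trans
    (Ideal.quotientMulEquivQuotientProd _ _ ((Ideal.isCoprime_span_singleton_iff f g).mpr h))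

/-- Evaluation at the roots `a i`, which differ pairwise by units, identifies
`R[X] / ∏ i, (X - a i)` with a power of `R`. -/
noncomputable def adjoinRootProdXSubCEquiv {ι : Type*} [Fintype ι] {a : ι → R}
    (ha : Pairwise fun i j ↦ IsUnit (a i - a j)) :
    AdjoinRoot (∏ i, (X - Polynomial.C (a i))) ≃+* (ι → R) :=
  have hX : Pairwise (IsCoprime on fun i ↦ X - Polynomial.C (a i)) :=
    fun _ _ hij ↦ Polynomial.isCoprime_X_sub_C_of_isUnit_sub (ha hij)
  (Ideal.quotEquivOfEq (Ideal.iInf_span_singleton hX).symm).trans <|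
    (Ideal.quotientInfRingEquivPiQuotient _ fun _ _ hij ↦
      (Ideal.isCoprime_span_singleton_iff _ _).mpr (hX hij)).trans <|
    RingEquiv.piCongrRight fun i ↦ (Polynomial.quotientSpanXSubCAlgEquiv (a i)).toRingEquiv

end AdjoinRoot

section CyclicGroup

/-- The homomorphism out of the cyclic group of order `m` determined by an element `x` with
`x ^ m = 1`. -/
def cyclicPowersHom {M : Type*} [Monoid M] {m : ℕ} [NeZero m] (x : M) (hx : x ^ m = 1) :
    C m →* M where
  toFun k := x ^ k.toAdd.val
  map_one' := by simp
  map_mul' k l := by rw [toAdd_mul, ZMod.val_add, ← pow_eq_pow_mod _ hx, pow_add]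

theorem cyclicPowersHom_ofAdd_one {M : Type*} [Monoid M] {m : ℕ} [NeZero m] (x : M)
    (hx : x ^ m = 1) : cyclicPowersHom x hx (Multiplicative.ofAdd 1) = x := by
  change x ^ (1 : ZMod m).val = x
  rw [ZMod.val_one_eq_one_mod, ← pow_eq_pow_mod 1 hx, pow_one]

theorem ofAdd_one_pow_val {m : ℕ} [NeZero m] (k : C m) :
    (Multiplicative.ofAdd 1 : C m) ^ k.toAdd.val = k := by
  rw [← ofAdd_nsmul, nsmul_one, ZMod.natCast_zmod_val, ofAdd_toAdd]

theorem root_X_pow_sub_one_pow (R : Type*) [CommRing R] (m : ℕ) :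
    AdjoinRoot.root (X ^ m - 1 : R[X]) ^ m = 1 := by
  rw [← sub_eq_zero, ← AdjoinRoot.mk_X, ← map_pow, ← map_one (AdjoinRoot.mk _), ← map_sub,
    AdjoinRoot.mk_self]

theorem eval₂_single_X_pow_sub_one (R : Type*) [CommRing R] (m : ℕ) :
    (X ^ m - 1 : R[X]).eval₂ (Algebra.ofId R R[C m] : R →+* R[C m])
      (MonoidAlgebra.single (Multiplicative.ofAdd 1) 1) = 0 := by
  have h : (Multiplicative.ofAdd 1 : C m) ^ m = 1 := by
    rw [← ofAdd_nsmul, nsmul_one, ZMod.natCast_self, ofAdd_zero]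
  simp [MonoidAlgebra.single_pow, h, MonoidAlgebra.one_def]

/-- The isomorphism `R[C_m] ≃ R[X] / (X ^ m - 1)` sending a generator of `C_m` to `X`. -/
noncomputable def cyclicGroupAlgebraEquiv (R : Type*) [CommRing R] (m : ℕ) [NeZero m] :
    R[C m] ≃ₐ[R] AdjoinRoot (X ^ m - 1 : R[X]) :=
  AlgEquiv.ofAlgHom
    (MonoidAlgebra.lift R _ (C m) (cyclicPowersHom _ (root_X_pow_sub_one_pow R m)))
    (AdjoinRoot.liftAlgHom _ (Algebra.ofId R _) _ (eval₂_single_X_pow_sub_one R m))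
    (AdjoinRoot.algHom_ext (by simp [cyclicPowersHom_ofAdd_one]))
    (MonoidAlgebra.algHom_ext (fun k ↦ by
      simp [cyclicPowersHom, MonoidAlgebra.single_pow, ofAdd_one_pow_val]) (by ext))

/-- If `X ^ m - 1` is a product of linear factors whose roots differ pairwise by units, then
`R[C_m]` is a power of `R`. -/
noncomputable def cyclicGroupAlgebraPiEquiv {R ι : Type*} [CommRing R] [Fintype ι] {m : ℕ}
    [NeZero m] {a : ι → R} (hX : X ^ m - 1 = ∏ i, (X - Polynomial.C (a i)))
    (ha : Pairwise fun i j ↦ IsUnit (a i - a j)) : R[C m] ≃+* (ι → R) :=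
  (cyclicGroupAlgebraEquiv R m).toRingEquiv.trans <|
    (Ideal.quotEquivOfEq (congrArg (Ideal.span {·}) hX)).trans (adjoinRootProdXSubCEquiv ha)

/-- Over a field containing a primitive `m`-th root of unity, `K[C_m]` splits completely. -/
noncomputable def cyclicGroupAlgebraSplitEquiv {K : Type*} [Field K] {m : ℕ} [NeZero m] {ζ : K}
    (hζ : IsPrimitiveRoot ζ m) : K[C m] ≃+* (Fin m → K) :=
  have hX : (X ^ m - 1 : K[X]) =
      ∏ μ : Polynomial.nthRootsFinset m (1 : K), (X - Polynomial.C (μ : K)) := by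
    rw [Polynomial.X_pow_sub_one_eq_prod (NeZero.pos m) hζ, ← Finset.prod_coe_sort]
  have hunit : Pairwise fun μ ν : Polynomial.nthRootsFinset m (1 : K) ↦ IsUnit (μ - ν : K) :=
    fun _ _ h ↦ (sub_ne_zero.mpr (Subtype.coe_ne_coe.mpr h)).isUnit
  (cyclicGroupAlgebraPiEquiv hX hunit).trans <|
    RingEquiv.piCongrLeft (fun _ ↦ K) (Finset.equivFinOfCardEq hζ.card_nthRootsFinset)

theorem isCoprime_X_pow_sub_one_X_pow_add_one {R : Type*} [CommRing R] (h2 : IsUnit (2 : R))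
    (m : ℕ) : IsCoprime (X ^ m - 1 : R[X]) (X ^ m + 1) := by
  obtain ⟨t, ht⟩ := h2.exists_right_inv
  have hC : (2 : R[X]) * Polynomial.C t = 1 := by
    rw [← Polynomial.C_ofNat, ← Polynomial.C_mul, ht, Polynomial.C_1]
  exact ⟨-Polynomial.C t, Polynomial.C t, by linear_combination hC⟩

/-- When `2` is invertible, `R[C_2m] ≃ R[C_m] × R[X] / (X ^ m + 1)`. -/
noncomputable def cyclicGroupAlgebraTwoMulEquiv {R : Type*} [CommRing R] (h2 : IsUnit (2 : R))
    (m : ℕ) [NeZero m] : R[C (2 * m)] ≃+* R[C m] × AdjoinRoot (X ^ m + 1 : R[X]) :=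
  have hX : (X ^ (2 * m) - 1 : R[X]) = (X ^ m - 1) * (X ^ m + 1) := by ring
  (cyclicGroupAlgebraEquiv R (2 * m)).toRingEquiv.trans <|
    (Ideal.quotEquivOfEq (congrArg (Ideal.span {·}) hX)).trans <|
    (adjoinRootMulEquiv (isCoprime_X_pow_sub_one_X_pow_add_one h2 m)).trans <|
    (cyclicGroupAlgebraEquiv R m).symm.toRingEquiv.prodCongr (.refl _)

/-- When `2` is invertible, `R[C_2] ≃ R ^ 2`. -/
noncomputable def cyclicTwoGroupAlgebraEquiv {R : Type*} [CommRing R] (h2 : IsUnit (2 : R)) :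
    R[C 2] ≃+* (Fin 2 → R) :=
  have hX : (X ^ 2 - 1 : R[X]) = ∏ i, (X - Polynomial.C (![1, -1] i)) := by
    rw [Fin.prod_univ_two, Matrix.cons_val_zero, Matrix.cons_val_one, Matrix.cons_val_fin_one,
      Polynomial.C_neg, Polynomial.C_1]
    ring
  have hunit : Pairwise fun i j ↦ IsUnit ((![1, -1] : Fin 2 → R) i - ![1, -1] j) := by
    have h2' : IsUnit (-1 - 1 : R) := by
      rw [← neg_add', one_add_one_eq_two]
      exact h2.neg
    intro i j hij
    fin_cases i <;> fin_cases j <;> simp_all [one_add_one_eq_two]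
  cyclicGroupAlgebraPiEquiv hX hunit

end CyclicGroup

section Products

theorem isUnit_two_of_algebra {R : Type*} [CommSemiring R] (h2 : IsUnit (2 : R)) (A : Type*)
    [Semiring A] [Algebra R A] : IsUnit (2 : A) := by
  simpa only [map_ofNat] using h2.map (algebraMap R A)

/-- If `R[H] ≃ S ^ n` and `2` is invertible, then `R[C_2 × H] ≃ S ^ (2 * n)`. -/
noncomputable def cyclicTwoProdGroupAlgebraEquiv {R H S : Type*} [CommRing R] [CommMonoid H]
    [NonUnitalNonAssocSemiring S] {n : ℕ} (h2 : IsUnit (2 : R)) (e : R[H] ≃+* (Fin n → S)) :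
    R[C 2 × H] ≃+* (Fin (2 * n) → S) :=
  MonoidAlgebra.curryRingEquiv.trans <|
    (cyclicTwoGroupAlgebraEquiv (isUnit_two_of_algebra h2 R[H])).trans <|
    (RingEquiv.piCongrRight fun _ ↦ e).trans (piFinMulRingEquiv 2 n S)

/-- When `2` is invertible, `R[C_2 ^ 3] ≃ R ^ 8`. -/
noncomputable def cyclicTwoCubedGroupAlgebraEquiv {R : Type*} [CommRing R]
    (h2 : IsUnit (2 : R)) : R[C 2 × C 2 × C 2] ≃+* (Fin (2 * (2 * 2)) → R) :=
  cyclicTwoProdGroupAlgebraEquiv h2 <| cyclicTwoProdGroupAlgebraEquiv h2 <|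
    cyclicTwoGroupAlgebraEquiv h2

/-- When `2` is invertible, `R[G × C_2 ^ 3] ≃ R[G] ^ 8`. -/
noncomputable def prodCyclicTwoCubedGroupAlgebraEquiv {R : Type*} [CommRing R]
    (h2 : IsUnit (2 : R)) (G : Type*) [CommMonoid G] :
    R[G × C 2 × C 2 × C 2] ≃+* (Fin 8 → R[G]) :=
  (MonoidAlgebra.mapDomainRingEquiv R MulEquiv.prodComm).trans <|
    (MonoidAlgebra.curryRingEquiv (M := C 2 × C 2 × C 2) (N := G)).trans <|
    cyclicTwoCubedGroupAlgebraEquiv (isUnit_two_of_algebra h2 R[G])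

/-- If `K` is a field with `2 ≠ 0` and a primitive fourth root of unity, then
`K[C_4 × C_2 ^ 3] ≃ K ^ 32`. -/
noncomputable def cyclicFourProdGroupAlgebraSplitEquiv {K : Type*} [Field K]
    (h2 : IsUnit (2 : K)) {ζ : K} (hζ : IsPrimitiveRoot ζ 4) :
    K[C 4 × C 2 × C 2 × C 2] ≃+* (Fin 32 → K) :=
  (prodCyclicTwoCubedGroupAlgebraEquiv h2 (C 4)).trans <|
    (RingEquiv.piCongrRight fun _ ↦ cyclicGroupAlgebraSplitEquiv hζ).trans
      (piFinMulRingEquiv 8 4 K)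

/-- When `2` is invertible, `R[C_4] ≃ R ^ 2 × R[X] / (X ^ 2 + 1)`. -/
noncomputable def cyclicFourGroupAlgebraEquiv {R : Type*} [CommRing R] (h2 : IsUnit (2 : R)) :
    R[C 4] ≃+* (Fin 2 → R) × AdjoinRoot (X ^ 2 + 1 : R[X]) :=
  (cyclicGroupAlgebraTwoMulEquiv h2 2).trans <|
    (cyclicTwoGroupAlgebraEquiv h2).prodCongr (.refl _)

/-- When `2` is invertible, `R[C_4 × C_2 ^ 3] ≃ R ^ 16 × (R[X] / (X ^ 2 + 1)) ^ 8`. -/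
noncomputable def cyclicFourProdGroupAlgebraEquiv {R : Type*} [CommRing R] (h2 : IsUnit (2 : R)) :
    R[C 4 × C 2 × C 2 × C 2] ≃+* (Fin 16 → R) × (Fin 8 → AdjoinRoot (X ^ 2 + 1 : R[X])) :=
  (prodCyclicTwoCubedGroupAlgebraEquiv h2 (C 4)).trans <|
    (RingEquiv.piCongrRight fun _ ↦ cyclicFourGroupAlgebraEquiv h2).trans <|
    (piProdRingEquiv (Fin 8) _ _).trans <| (piFinMulRingEquiv 8 2 R).prodCongr (.refl _)

end Products

section FiniteField

variable {K : Type*} [Field K] [Finite K]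

theorem exists_isPrimitiveRoot_of_dvd_card_sub_one {m : ℕ} (hm : m ∣ Nat.card K - 1) :
    ∃ ζ : K, IsPrimitiveRoot ζ m := by
  obtain ⟨g, hg⟩ := IsCyclic.exists_ofOrder_eq_natCard (α := Kˣ)
  obtain ⟨d, hd⟩ := hm
  have hgd : orderOf g = d * m := by rw [hg, Nat.card_units, hd, mul_comm]
  have hroot : IsPrimitiveRoot (g ^ d) m := (IsPrimitiveRoot.orderOf g).pow (orderOf_pos g) hgd
  exact ⟨_, IsPrimitiveRoot.coe_units_iff.mpr hroot⟩

/-- The unit group of a finite field is cyclic. -/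
noncomputable def finiteFieldUnitsEquiv {q : ℕ} (hq : Nat.card K = q) : Kˣ ≃* C (q - 1) :=
  mulEquivOfCyclicCardEq <| by rw [Nat.card_units, hq, Nat.card_congr Multiplicative.toAdd,
    Nat.card_zmod]

/-- The unit group of a power of a finite field with `q` elements is a power of `C_(q - 1)`. -/
noncomputable def piFiniteFieldUnitsEquiv (ι : Type*) {q : ℕ} (hq : Nat.card K = q) :
    (ι → K)ˣ ≃* (ι → C (q - 1)) :=
  MulEquiv.piUnits.trans (MulEquiv.piCongrRight fun _ ↦ finiteFieldUnitsEquiv hq)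

end FiniteField

section Polynomial

variable {K : Type*} [Field K]

theorem irreducible_X_sq_add_one (h : ¬ IsSquare (-1 : K)) : Irreducible (X ^ 2 + 1 : K[X]) := by
  have hirr := X_pow_sub_C_irreducible_of_prime Nat.prime_two (a := (-1 : K))
    fun b hb ↦ h ⟨b, by rw [← hb, sq]⟩
  simpa using hirr

theorem natCard_adjoinRoot {f : K[X]} (hf : f ≠ 0) :
    Nat.card (AdjoinRoot f) = Nat.card K ^ f.natDegree := by
  have := (AdjoinRoot.powerBasis hf).finite
  rw [Module.natCard_eq_pow_finrank (K := K), (AdjoinRoot.powerBasis hf).finrank,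
    AdjoinRoot.powerBasis_dim]

end Polynomial

theorem unit_group_stmt_11 (F : Type*) [Field F] [Fintype F] (p n : ℕ)
    (hp : p.Prime) (hp2 : 2 < p) [CharP F p] (hn : 0 < n)
    (hF : Fintype.card F = p ^ n) :
    (((p ^ n : ZMod 4) = 1) →
      Nonempty ((MonoidAlgebra F (C 4 × C 2 × C 2 × C 2))ˣ ≃* ((Fin (32) → C (p ^ n - 1))))) ∧
    (((p ^ n : ZMod 4) = -1) →
      Nonempty ((MonoidAlgebra F (C 4 × C 2 × C 2 × C 2))ˣ ≃* ((Fin (16) → C (p ^ n - 1)) × (Fin (8) → C (p ^ (2 * n) - 1))))) := by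
  have hq : Nat.card F = p ^ n := by rw [Nat.card_eq_fintype_card, hF]
  have h2 : IsUnit (2 : F) := (Ring.two_ne_zero (by rw [ringChar.eq F p]; omega)).isUnit
  refine ⟨fun h ↦ ?_, fun h ↦ ?_⟩
  · have hmod : p ^ n % 4 = 1 % 4 :=
      (ZMod.natCast_eq_natCast_iff' _ _ 4).mp (by exact_mod_cast h)
    obtain ⟨ζ, hζ⟩ := exists_isPrimitiveRoot_of_dvd_card_sub_one (K := F) (m := 4) (by omega)
    exact ⟨(Units.mapEquiv (cyclicFourProdGroupAlgebraSplitEquiv h2 hζ).toMulEquiv).trans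
      (piFiniteFieldUnitsEquiv _ hq)⟩
  · have hmod : p ^ n % 4 = 3 % 4 :=
      (ZMod.natCast_eq_natCast_iff' _ _ 4).mp (by push_cast; rw [h]; decide)
    have hirr : Irreducible (X ^ 2 + 1 : F[X]) := irreducible_X_sq_add_one <| by
      rw [FiniteField.isSquare_neg_one_iff, hF]; omega
    have hcard : Nat.card (AdjoinRoot (X ^ 2 + 1 : F[X])) = p ^ (2 * n) := by
      have hdeg : (X ^ 2 + 1 : F[X]).natDegree = 2 := by compute_degree!
      rw [natCard_adjoinRoot hirr.ne_zero, hq, hdeg, ← pow_mul, mul_comm]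
    have : Fact (Irreducible (X ^ 2 + 1 : F[X])) := ⟨hirr⟩
    have : Finite (AdjoinRoot (X ^ 2 + 1 : F[X])) :=
      Nat.finite_of_card_ne_zero (hcard ▸ (pow_pos hp.pos _).ne')
    exact ⟨(Units.mapEquiv (cyclicFourProdGroupAlgebraEquiv h2).toMulEquiv).trans <|
      MulEquiv.prodUnits.trans <|
      (piFiniteFieldUnitsEquiv _ hq).prodCongr (piFiniteFieldUnitsEquiv _ hcard)⟩
end
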